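/- Let [a,b] be a nondegenerate compact interval. The family 𝒜ℳ𝒲 is maximal dense-lineable in c₀(C([a,b])): there exists a linear subspace E of c₀(C([a,b])) that is dense with respect to the norm ‖(fₙ)ₙ‖ = supₙ ‖fₙ‖∞, has dimension equal to the cardinality of the continuum 𝔠, and satisfies E \ {0} ⊂ 𝒜ℳ𝒲. -/

import Mathlib

open Filter Topology ZeroAtInfty

/-- Anti M-Weierstrass sequences. -/
def AntiMW (a b : ℝ) (f : ℕ → C(Set.Icc a b, ℝ)) : Prop :=
  (∀ x : Set.Icc a b, Summable fun n => |f n x|) ∧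
  (∃ S : Set.Icc a b → ℝ,
    TendstoUniformly (fun N x => ∑ n ∈ Finset.range N, f n x) S atTop) ∧
  ¬ Summable fun n => ‖f n‖

lemma exists_bumps (a b : ℝ) (hab : a < b) : ∃ φ : ℕ → C(Set.Icc a b, ℝ),
    (∀ n, ‖φ n‖ = 1) ∧ (∀ n m x, φ n x ≠ 0 → φ m x ≠ 0 → n = m) := by
  obtain ⟨q, hq, hqa, hqb⟩ : ∃ q : ℕ → ℝ, StrictAnti q ∧ (∀ n, a ≤ q n) ∧ (∀ n, q n ≤ b) := by
    refine ⟨fun n => a + (b - a) / ((n : ℝ) + 1), ?_, ?_, ?_⟩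
    · intro m n hmn
      have h : (m : ℝ) < n := by exact_mod_cast hmn
      have h0 : (0 : ℝ) ≤ m := m.cast_nonneg
      have : (b - a) / ((n : ℝ) + 1) < (b - a) / ((m : ℝ) + 1) :=
        div_lt_div_of_pos_left (by linarith) (by linarith) (by linarith)
      simpa using this
    · intro n
      have : 0 ≤ (b - a) / ((n : ℝ) + 1) := div_nonneg (by linarith) (by positivity)
      simpa using this
    · intro n
      have : (b - a) / ((n : ℝ) + 1) ≤ b - a :=
        div_le_self (by linarith) (by have : (0:ℝ) ≤ n := n.cast_nonneg
                                      linarith)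
      show a + (b - a) / ((n : ℝ) + 1) ≤ b
      linarith
  have hlt : ∀ n, q (n+1) < q n := fun n => hq (Nat.lt_succ_self n)
  let φ : ℕ → C(Set.Icc a b, ℝ) := fun n =>
    ⟨fun x => 4 / (q n - q (n+1))^2 * max 0 ((q n - x) * (x - q (n+1))), by fun_prop⟩
  have hφ : ∀ n (x : Set.Icc a b),
    φ n x = 4 / (q n - q (n+1))^2 * max 0 ((q n - x) * (x - q (n+1))) := fun n x => rfl
  have hsupp : ∀ n (x : Set.Icc a b), φ n x ≠ 0 → q (n+1) < x ∧ (x:ℝ) < q n := by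
    intro n x hx
    have hpos : 0 < (q n - x) * ((x:ℝ) - q (n+1)) := by
      by_contra h
      apply hx
      rw [hφ, max_eq_left (not_lt.1 h), mul_zero]
    have := hlt n
    rcases pos_and_pos_or_neg_and_neg_of_mul_pos hpos with h | h
    · constructor <;> linarith [h.1, h.2]
    · linarith [h.1, h.2]
  refine ⟨φ, ?_, ?_⟩
  · intro n
    have hd : 0 < q n - q (n+1) := sub_pos.2 (hlt n)
    apply le_antisymm
    · rw [ContinuousMap.norm_le _ zero_le_one]
      intro x
      rw [Real.norm_eq_abs, abs_of_nonneg (by rw [hφ]; positivity), hφ,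
        div_mul_eq_mul_div, div_le_one (by positivity)]
      have : max 0 ((q n - x) * ((x:ℝ) - q (n+1))) ≤ (q n - q (n+1))^2 / 4 := by
        apply max_le (by positivity)
        nlinarith [sq_nonneg ((q n - x) - ((x:ℝ) - q (n+1)))]
      linarith
    · let x : Set.Icc a b := ⟨(q n + q (n+1)) / 2, by
        constructor <;> linarith [hqa n, hqa (n+1), hqb n, hqb (n+1)]⟩
      have h1 : φ n x = 1 := by
        rw [hφ]
        have : (q n - (x:ℝ)) * ((x:ℝ) - q (n+1)) = (q n - q (n+1))^2 / 4 := by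
          show (q n - (q n + q (n+1)) / 2) * ((q n + q (n+1)) / 2 - q (n+1)) = _
          ring
        rw [this, max_eq_right (by positivity)]
        field_simp
      have := (φ n).norm_coe_le_norm x
      rw [h1] at this
      simpa using this
  · have key : ∀ n m x, n < m → φ n x ≠ 0 → φ m x ≠ 0 → False := by
      intro n m x hnm hn hm
      have h1 := (hsupp n x hn).1
      have h2 := (hsupp m x hm).2
      have h3 : q m ≤ q (n+1) := hq.antitone hnm
      linarith
    intro n m x hn hm
    rcases lt_trichotomy n m with h | h | h
    · exact (key n m x h hn hm).elim
    · exact h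
    · exact (key m n x h hm hn).elim

lemma antiMW_of_eventually (a b : ℝ) (φ : ℕ → C(Set.Icc a b, ℝ)) (h1 : ∀ n, ‖φ n‖ = 1)
    (h2 : ∀ n m x, φ n x ≠ 0 → φ m x ≠ 0 → n = m)
    (F : ℕ → C(Set.Icc a b, ℝ)) (γ : ℕ → ℝ) (N : ℕ) (hF : ∀ n, N ≤ n → F n = γ n • φ n)
    (hγ : Tendsto γ atTop (𝓝 0)) (hs : ¬ Summable γ) : AntiMW a b F := by
  have hne : ∀ n, N ≤ n → ∀ x, F n x ≠ 0 → φ n x ≠ 0 := by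
    intro n hn x h h'
    apply h
    rw [hF n hn]
    simp [h']
  have hsum : ∀ x, Summable fun n => |F n x| := by
    intro x
    by_cases h : ∃ m, φ m x ≠ 0
    · obtain ⟨m, hm⟩ := h
      apply summable_of_ne_finset_zero (s := insert m (Finset.range N))
      intro n hn
      simp only [Finset.mem_insert, Finset.mem_range, not_or, not_lt] at hn
      by_contra h
      exact hn.1 (h2 n m x (hne n hn.2 x (fun h' => h (by simp [h']))) hm)
    · push Not at h
      apply summable_of_ne_finset_zero (s := Finset.range N)
      intro n hn
      simp only [Finset.mem_range, not_lt] at hn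
      rw [hF n hn]
      simp [h n]
  refine ⟨hsum, ⟨fun x => ∑' n, F n x, ?_⟩, ?_⟩
  · rw [Metric.tendstoUniformly_iff]
    intro ε hε
    obtain ⟨K, hK⟩ := (Metric.tendsto_atTop.1 hγ) ε hε
    filter_upwards [eventually_ge_atTop (max N K)] with M hM x
    have hMN : N ≤ M := (le_max_left _ _).trans hM
    have hMK : K ≤ M := (le_max_right _ _).trans hM
    have hx : Summable fun n => F n x := (hsum x).of_abs
    rw [Real.dist_eq, ← hx.sum_add_tsum_nat_add M, add_sub_cancel_left]
    by_cases h : ∃ m, F (m + M) x ≠ 0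
    · obtain ⟨m, hm⟩ := h
      rw [tsum_eq_single m]
      · have hb := hK (m + M) (by omega)
        rw [Real.dist_eq, sub_zero] at hb
        rw [hF _ (by omega)]
        have h3 := (φ (m+M)).norm_coe_le_norm x
        rw [h1, Real.norm_eq_abs] at h3
        have : |(γ (m+M) • φ (m+M)) x| = |γ (m+M)| * |φ (m+M) x| := by
          simp [abs_mul]
        rw [this]
        calc _ ≤ |γ (m+M)| * 1 := by gcongr
          _ < ε := by simpa using hb
      · intro k hk
        by_contra h
        have := h2 _ _ x (hne _ (by omega) x h) (hne _ (by omega) x hm)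
        omega
    · push Not at h
      simp [h, hε]
  · intro h
    apply hs
    rw [← summable_nat_add_iff N] at h ⊢
    apply Summable.of_norm
    refine h.congr ?_
    intro n
    rw [hF _ (by omega), norm_smul, h1, mul_one]

lemma not_summable_comb (c : Set.Ioo (0:ℝ) 1 →₀ ℝ) (hc : c ≠ 0) :
    ¬ Summable fun n : ℕ => c.sum fun s r => r * ((n : ℝ) + 1) ^ (-(s : ℝ)) := by
  intro hS
  have hne : c.support.Nonempty := Finsupp.support_nonempty_iff.2 hc
  set s0 := c.support.min' hne with hs0
  have hs0m : s0 ∈ c.support := c.support.min'_mem hne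
  have hc0 : c s0 ≠ 0 := Finsupp.mem_support_iff.1 hs0m
  have htop : Tendsto (fun n : ℕ => (n : ℝ) + 1) atTop atTop :=
    tendsto_atTop_add_const_right _ _ tendsto_natCast_atTop_atTop
  have hlim : Tendsto (fun n : ℕ => ((n : ℝ) + 1) ^ (s0 : ℝ) *
      c.sum fun s r => r * ((n : ℝ) + 1) ^ (-(s : ℝ))) atTop (𝓝 (c s0)) := by
    have h1 : ∀ n : ℕ, (((n : ℝ) + 1) ^ (s0 : ℝ) *
      c.sum fun s r => r * ((n : ℝ) + 1) ^ (-(s : ℝ))) =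
        ∑ s ∈ c.support, c s * ((n : ℝ) + 1) ^ (-((s : ℝ) - s0)) := by
      intro n
      rw [Finsupp.sum, Finset.mul_sum]
      refine Finset.sum_congr rfl fun s _ => ?_
      have : -((s:ℝ) - s0) = s0 + -s := by ring
      rw [this, Real.rpow_add (by positivity)]
      ring
    simp_rw [h1]
    have h2 : c s0 = ∑ s ∈ c.support, if s = s0 then c s else 0 := by
      rw [Finset.sum_ite_eq' c.support s0 (fun s => c s), if_pos hs0m]
    rw [h2]
    refine tendsto_finsetSum _ fun s hs => ?_
    split_ifs with h
    · subst h
      simp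
    · have hlt : s0 < s := lt_of_le_of_ne (c.support.min'_le s hs) (Ne.symm h)
      have hlt' : (0:ℝ) < (s:ℝ) - s0 := sub_pos.2 hlt
      have := ((tendsto_rpow_neg_atTop hlt').comp htop).const_mul (c s)
      simpa using this
  have hev : ∀ᶠ n : ℕ in atTop, |c s0| / 2 < |((n : ℝ) + 1) ^ (s0 : ℝ) *
      c.sum fun s r => r * ((n : ℝ) + 1) ^ (-(s : ℝ))| := by
    apply hlim.abs.eventually_const_lt
    have := abs_pos.2 hc0
    linarith
  have hp : Summable fun n : ℕ => ((n : ℝ) + 1) ^ (-(s0 : ℝ)) := by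
    apply Summable.of_norm_bounded_eventually_nat (hS.abs.mul_left (2 / |c s0|))
    filter_upwards [hev] with n hn
    have hc1 := abs_pos.2 hc0
    have hpos : 0 < ((n : ℝ) + 1) ^ (s0 : ℝ) := by positivity
    rw [abs_mul, abs_of_pos hpos] at hn
    rw [Real.norm_eq_abs, abs_of_pos (by positivity), Real.rpow_neg (by positivity)]
    set G := |c.sum fun s r => r * ((n : ℝ) + 1) ^ (-(s : ℝ))|
    rw [inv_le_iff_one_le_mul₀ hpos, div_mul_eq_mul_div, div_mul_eq_mul_div, le_div_iff₀ hc1]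
    linarith
  have hp' : Summable fun n : ℕ => (n : ℝ) ^ (-(s0 : ℝ)) := by
    rw [← summable_nat_add_iff 1]
    simpa using hp
  rw [Real.summable_nat_rpow] at hp'
  linarith [s0.2.2]

lemma card_le (a b : ℝ) (hab : a < b) :
    Cardinal.mk (C₀(ℕ, C(Set.Icc a b, ℝ)) × ℕ) ≤ Cardinal.continuum := by
  haveI : Nonempty (Set.Icc a b) := ⟨⟨a, le_refl a, hab.le⟩⟩
  let G : C₀(ℕ, C(Set.Icc a b, ℝ)) → (ℕ → ℕ → ℝ) :=
    fun F n k => F n (TopologicalSpace.denseSeq (Set.Icc a b) k)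
  have hG : Function.Injective G := by
    intro F F' h
    ext n : 1
    apply DFunLike.coe_injective
    apply (TopologicalSpace.denseRange_denseSeq (Set.Icc a b)).equalizer
      (F n).continuous (F' n).continuous
    funext k
    exact congrFun (congrFun h n) k
  have h1 := Cardinal.mk_le_of_injective hG
  have h2 : Cardinal.mk (ℕ → ℕ → ℝ) = Cardinal.continuum := by
    simp [Cardinal.mk_real]
  rw [h2] at h1
  rw [Cardinal.mk_prod]
  simp only [Cardinal.lift_id, Cardinal.mk_nat, Cardinal.lift_uzero]
  calc _ ≤ Cardinal.continuum * Cardinal.aleph0 := by gcongr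
    _ = _ := by simp

/-- a sequence tending to zero as an element of C₀ -/
noncomputable def mkC0 {V : Type*} [NormedAddCommGroup V] (f : ℕ → V)
    (hf : Tendsto f atTop (𝓝 0)) : C₀(ℕ, V) where
  toFun := f
  continuous_toFun := continuous_of_discreteTopology
  zero_at_infty' := by
    rw [cocompact_eq_cofinite, Nat.cofinite_eq_atTop]
    exact hf

theorem stmt10 (a b : ℝ) (hab : a < b) :
    ∃ E : Submodule ℝ C₀(ℕ, C(Set.Icc a b, ℝ)),
      Dense (E : Set C₀(ℕ, C(Set.Icc a b, ℝ))) ∧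
      Module.rank ℝ E = Cardinal.continuum ∧
      ∀ F ∈ E, F ≠ 0 → AntiMW a b (fun n => F n) := by
  obtain ⟨φ, hφ1, hφ2⟩ := exists_bumps a b hab
  have hI : Cardinal.mk (Set.Ioo (0:ℝ) 1) = Cardinal.continuum := Cardinal.mk_Ioo_real zero_lt_one
  obtain ⟨g, hg⟩ : ∃ g : Set.Ioo (0:ℝ) 1 → C₀(ℕ, C(Set.Icc a b, ℝ)) × ℕ,
      Function.Surjective g := by
    have h := card_le a b hab
    rw [← hI] at h
    obtain ⟨e⟩ := h
    exact ⟨Function.invFun e, Function.invFun_surjective e.injective⟩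
  have htop : Tendsto (fun n : ℕ => (n : ℝ) + 1) atTop atTop :=
    tendsto_atTop_add_const_right _ _ tendsto_natCast_atTop_atTop
  have hpow : ∀ s : Set.Ioo (0:ℝ) 1,
      Tendsto (fun n : ℕ => ((n : ℝ) + 1) ^ (-(s : ℝ))) atTop (𝓝 0) := fun s =>
    (tendsto_rpow_neg_atTop s.2.1).comp htop
  let wf : Set.Ioo (0:ℝ) 1 → ℕ → C(Set.Icc a b, ℝ) := fun s n =>
    (if n < (g s).2 then (g s).1 n else 0) +
      (((g s).2 + 1 : ℝ)⁻¹ * ((n : ℝ) + 1) ^ (-(s : ℝ))) • φ n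
  have hwf0 : ∀ s, Tendsto (wf s) atTop (𝓝 0) := by
    intro s
    have h2 : Tendsto (fun n : ℕ => (((g s).2 + 1 : ℝ)⁻¹ * ((n : ℝ) + 1) ^ (-(s : ℝ))) • φ n)
        atTop (𝓝 0) := by
      rw [tendsto_zero_iff_norm_tendsto_zero]
      have := ((hpow s).const_mul ((g s).2 + 1 : ℝ)⁻¹).norm
      simp only [mul_zero, norm_zero] at this
      refine this.congr fun n => ?_
      rw [norm_smul, hφ1, mul_one]
    refine h2.congr' ?_
    filter_upwards [eventually_ge_atTop (g s).2] with n hn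
    simp [wf, not_lt.2 hn]
  let w : Set.Ioo (0:ℝ) 1 → C₀(ℕ, C(Set.Icc a b, ℝ)) := fun s => mkC0 (wf s) (hwf0 s)
  have hw : ∀ s n, w s n = wf s n := fun s n => rfl
  have key : ∀ c : Set.Ioo (0:ℝ) 1 →₀ ℝ, c ≠ 0 →
      AntiMW a b (fun n => Finsupp.linearCombination ℝ w c n) := by
    intro c hc
    let d : Set.Ioo (0:ℝ) 1 →₀ ℝ :=
      Finsupp.onFinset c.support (fun s => c s * ((g s).2 + 1 : ℝ)⁻¹) (fun s hs => by
        rw [Finsupp.mem_support_iff]; exact left_ne_zero_of_mul hs)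
    have hd : ∀ s, d s = c s * ((g s).2 + 1 : ℝ)⁻¹ := fun s => rfl
    have hd0 : d ≠ 0 := by
      intro h
      apply hc
      ext s
      have h1 : d s = 0 := by rw [h]; rfl
      rw [hd] at h1
      have : ((g s).2 + 1 : ℝ)⁻¹ ≠ 0 := by positivity
      simpa [this] using h1
    have hdsum : ∀ n : ℕ, (d.sum fun s r => r * ((n : ℝ) + 1) ^ (-(s : ℝ))) =
        ∑ s ∈ c.support, (c s * ((g s).2 + 1 : ℝ)⁻¹) * ((n : ℝ) + 1) ^ (-(s : ℝ)) := by
      intro n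
      exact Finsupp.onFinset_sum _ (fun s => by simp)
    refine antiMW_of_eventually a b φ hφ1 hφ2 _ _ (c.support.sup fun s => (g s).2) ?_ ?_
      (not_summable_comb d hd0)
    · intro n hn
      rw [hdsum, Finset.sum_smul]
      have : Finsupp.linearCombination ℝ w c n = ∑ s ∈ c.support, c s • w s n := by
        let ev : C₀(ℕ, C(Set.Icc a b, ℝ)) →+ C(Set.Icc a b, ℝ) :=
          { toFun := fun F => F n, map_zero' := rfl, map_add' := fun _ _ => rfl }
        show ev _ = _
        rw [Finsupp.linearCombination_apply, Finsupp.sum, map_sum]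
        rfl
      rw [this]
      refine Finset.sum_congr rfl fun s hs => ?_
      have hns : (g s).2 ≤ n := (Finset.le_sup (f := fun s => (g s).2) hs).trans hn
      rw [hw]
      simp only [wf, if_neg (not_lt.2 hns), zero_add, smul_smul, mul_assoc]
    · simp_rw [hdsum]
      have := tendsto_finsetSum c.support fun s _ =>
        (hpow s).const_mul (c s * ((g s).2 + 1 : ℝ)⁻¹)
      simpa using this
  have hli : LinearIndependent ℝ w := by
    rw [linearIndependent_iff]
    intro c h
    by_contra hc
    apply (key c hc).2.2
    rw [h]
    simp
  refine ⟨Submodule.span ℝ (Set.range w), ?_, ?_, ?_⟩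
  · rw [Metric.dense_iff]
    intro F ε hε
    have hF : Tendsto (fun n => F n) atTop (𝓝 0) := by
      have := F.zero_at_infty'
      rw [cocompact_eq_cofinite, Nat.cofinite_eq_atTop] at this
      exact this
    obtain ⟨N, hN⟩ := Metric.tendsto_atTop.1 hF (ε/4) (by positivity)
    obtain ⟨K, hK⟩ := exists_nat_one_div_lt (show (0:ℝ) < ε/4 by positivity)
    obtain ⟨s, hs⟩ := hg (F, max N K)
    refine ⟨w s, ?_, Submodule.subset_span ⟨s, rfl⟩⟩
    rw [Metric.mem_ball]
    have hle : dist (w s) F ≤ ε/2 := by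
      rw [← ZeroAtInftyContinuousMap.dist_toBCF_eq_dist,
        BoundedContinuousFunction.dist_le (by positivity)]
      intro n
      show dist (wf s n) (F n) ≤ ε/2
      have hsm : ‖(((g s).2 + 1 : ℝ)⁻¹ * ((n : ℝ) + 1) ^ (-(s : ℝ))) • φ n‖ ≤ ε/4 := by
        rw [norm_smul, hφ1, mul_one, Real.norm_eq_abs, abs_of_nonneg (by positivity), hs]
        have e1 : ((n : ℝ) + 1) ^ (-(s : ℝ)) ≤ 1 :=
          Real.rpow_le_one_of_one_le_of_nonpos (by linarith [(Nat.cast_nonneg n : (0:ℝ) ≤ n)])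
            (by linarith [s.2.1])
        have e2 : (((max N K : ℕ) : ℝ) + 1)⁻¹ ≤ ε/4 := by
          refine le_trans ?_ hK.le
          rw [one_div]
          have : (K:ℝ) ≤ ((max N K : ℕ) : ℝ) := by exact_mod_cast le_max_right N K
          gcongr
        calc _ ≤ (((max N K : ℕ) : ℝ) + 1)⁻¹ * 1 := by gcongr
          _ ≤ ε/4 := by simpa using e2
      rw [dist_eq_norm]
      by_cases hn : n < (g s).2
      · have : wf s n - F n = (((g s).2 + 1 : ℝ)⁻¹ * ((n : ℝ) + 1) ^ (-(s : ℝ))) • φ n := by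
          simp only [wf, if_pos hn]
          rw [hs]
          simp
        rw [this]
        linarith
      · have : wf s n - F n =
            (((g s).2 + 1 : ℝ)⁻¹ * ((n : ℝ) + 1) ^ (-(s : ℝ))) • φ n - F n := by
          simp only [wf, if_neg hn, zero_add]
        rw [this]
        rw [hs] at hn
        have h3 := hN n ((le_max_left N K).trans (not_lt.1 hn))
        rw [dist_zero_right] at h3
        have := norm_sub_le ((((g s).2 + 1 : ℝ)⁻¹ * ((n : ℝ) + 1) ^ (-(s : ℝ))) • φ n) (F n)
        linarith
    linarith
  · rw [rank_span hli, Cardinal.mk_range_eq _ hli.injective, hI]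
  · intro F hF hF0
    obtain ⟨c, rfl⟩ := (Finsupp.mem_span_range_iff_exists_finsupp).1 hF
    have := key c (by rintro rfl; simp at hF0)
    rwa [Finsupp.linearCombination_apply] at this
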